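/- arXiv:math/0502395 — 2 statements merged into one kernel-verified Lean document; each statement's English description precedes it below -/
import Mathlib

section
/- For all real numbers r₀ and θ, the function R ↦ (sinh(r₀ + R)·θ + 4R)/sinh(R) tends to e^{r₀}·θ as R → ∞. -/
open Real Filter

/-- For all real numbers `r₀` and `θ`, the function
`R ↦ (sinh(r₀ + R)·θ + 4R)/sinh(R)` tends to `e^{r₀}·θ` as `R → ∞`. -/
theorem sinh_ratio_tendsto_exp_mul (r₀ θ : ℝ) :
    Tendsto (fun R : ℝ => (Real.sinh (r₀ + R) * θ + 4 * R) / Real.sinh R)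
      atTop (nhds (Real.exp r₀ * θ)) := by
  have h0 : Tendsto (fun R : ℝ => Real.exp (-R)) atTop (nhds 0) :=
    Real.tendsto_exp_neg_atTop_nhds_zero
  have h1 : Tendsto (fun R : ℝ => R * Real.exp (-R)) atTop (nhds 0) := by
    simpa using Real.tendsto_pow_mul_exp_neg_atTop_nhds_zero 1
  have h2 : Tendsto (fun R : ℝ => ((Real.exp r₀ - Real.exp (-r₀) * Real.exp (-R) ^ 2) * θ
      + 8 * (R * Real.exp (-R))) / (1 - Real.exp (-R) ^ 2)) atTop
      (nhds (((Real.exp r₀ - Real.exp (-r₀) * 0 ^ 2) * θ + 8 * 0) / (1 - 0 ^ 2))) := by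
    refine Tendsto.div ?_ (tendsto_const_nhds.sub (h0.pow 2)) (by norm_num)
    exact ((tendsto_const_nhds.sub ((h0.pow 2).const_mul _)).mul_const θ).add (h1.const_mul 8)
  have h3 : ((Real.exp r₀ - Real.exp (-r₀) * 0 ^ 2) * θ + 8 * 0) / (1 - 0 ^ 2)
      = Real.exp r₀ * θ := by norm_num
  rw [h3] at h2
  refine h2.congr fun R => ?_
  have hE : Real.exp R * Real.exp (-R) = 1 := by rw [← Real.exp_add]; simp
  have hne : 2 * Real.exp (-R) ≠ 0 := by positivity
  rw [← mul_div_mul_left _ (Real.sinh R) hne]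
  rw [Real.sinh_eq, Real.sinh_eq, neg_add, Real.exp_add, Real.exp_add]
  congr 1
  · linear_combination (-Real.exp r₀ * θ) * hE
  · linear_combination -hE
end

section
/- Let G be a group acting on a set Ω, ι an index type, γ : ι → G, and U⁺, U⁻ : ι → Set Ω, such that: (i) for every i, γ_i · U_i⁺ ⊆ U_i⁺ and γ_i⁻¹ · U_i⁻ ⊆ U_i⁻; (ii) for all i ≠ j, γ_j · (U_i⁺ ∪ U_i⁻) ⊆ U_j⁺ and γ_j⁻¹ · (U_i⁺ ∪ U_i⁻) ⊆ U_j⁻. Let k ≥ 1, let s₀, …, s_{k−1} ∈ ι with s_ℓ ≠ s_{ℓ+1} for each 0 ≤ ℓ < k−1, let t₀, …, t_{k−1} be nonzero integers, and set w = γ_{s₀}^{t₀} · γ_{s₁}^{t₁} ⋯ γ_{s_{k−1}}^{t_{k−1}}. Then for every j ∈ ι with j ≠ s_{k−1}: w · (U_j⁺ ∪ U_j⁻) ⊆ U_{s₀}⁺ if t₀ > 0, and w · (U_j⁺ ∪ U_j⁻) ⊆ U_{s₀}⁻ if t₀ < 0. -/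
open Pointwise

/-- Iterating a ping-pong step. -/
theorem pingpong_pow_aux {G Ω : Type*} [Group G] [MulAction G Ω] (g : G) (A B : Set Ω)
    (hA : g • A ⊆ B) (hB : g • B ⊆ B) (n : ℕ) : g ^ (n + 1) • A ⊆ B := by
  induction n with
  | zero => simpa using hA
  | succ n ih =>
    rw [pow_succ', mul_smul]
    exact (Set.smul_set_mono ih).trans hB

/-- Ping-pong for words in normal form: under the ping-pong configuration, a word
`w = γ_{s₀}^{t₀} ⋯ γ_{s_{k−1}}^{t_{k−1}}` with all exponents nonzero and consecutive
indices distinct moves `U⁺ j ∪ U⁻ j` (for `j ≠ s_{k−1}`) into `U⁺ s₀` if `t₀ > 0`,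
and into `U⁻ s₀` if `t₀ < 0`. -/
theorem pingpong_word_normal_form {G Ω ι : Type*} [Group G] [MulAction G Ω]
    (γ : ι → G) (Uplus Uminus : ι → Set Ω)
    (h1 : ∀ i, γ i • Uplus i ⊆ Uplus i ∧ (γ i)⁻¹ • Uminus i ⊆ Uminus i)
    (h2 : ∀ i j, i ≠ j →
      γ j • (Uplus i ∪ Uminus i) ⊆ Uplus j ∧
      (γ j)⁻¹ • (Uplus i ∪ Uminus i) ⊆ Uminus j)
    (k : ℕ) (hk : 1 ≤ k) (s : Fin k → ι) (t : Fin k → ℤ)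
    (hs : ∀ (ℓ : ℕ) (h : ℓ + 1 < k), s ⟨ℓ, by omega⟩ ≠ s ⟨ℓ + 1, h⟩)
    (ht : ∀ ℓ, t ℓ ≠ 0)
    (w : G) (hw : w = (List.ofFn fun ℓ => γ (s ℓ) ^ t ℓ).prod)
    (j : ι) (hj : j ≠ s ⟨k - 1, by omega⟩) :
    (0 < t ⟨0, by omega⟩ →
      w • (Uplus j ∪ Uminus j) ⊆ Uplus (s ⟨0, by omega⟩)) ∧
    (t ⟨0, by omega⟩ < 0 →
      w • (Uplus j ∪ Uminus j) ⊆ Uminus (s ⟨0, by omega⟩)) := by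
  have key : ∀ i m, i ≠ m → ∀ e : ℤ,
      (0 < e → γ m ^ e • (Uplus i ∪ Uminus i) ⊆ Uplus m) ∧
      (e < 0 → γ m ^ e • (Uplus i ∪ Uminus i) ⊆ Uminus m) := by
    intro i m him e
    constructor
    · intro he
      obtain ⟨n, rfl⟩ : ∃ n : ℕ, e = ((n + 1 : ℕ) : ℤ) := ⟨(e - 1).toNat, by omega⟩
      rw [zpow_natCast]
      exact pingpong_pow_aux _ _ _ (h2 i m him).1 (h1 m).1 n
    · intro he
      obtain ⟨n, rfl⟩ : ∃ n : ℕ, e = -((n + 1 : ℕ) : ℤ) := ⟨(-e - 1).toNat, by omega⟩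
      rw [zpow_neg, zpow_natCast, ← inv_pow]
      exact pingpong_pow_aux _ _ _ (h2 i m him).2 (h1 m).2 n
  obtain ⟨n, rfl⟩ : ∃ n, k = n + 1 := ⟨k - 1, by omega⟩
  induction n generalizing w with
  | zero =>
    subst hw
    simpa using key j (s 0) hj (t 0)
  | succ n ih =>
    have hsub := ih (w := _) (hk := by omega) (s := fun ℓ => s ℓ.succ) (t := fun ℓ => t ℓ.succ)
      (hs := fun ℓ h => hs (ℓ + 1) (by omega)) (ht := fun ℓ => ht _) (hw := rfl) (hj := hj)
    have hne := hs 0 (by omega)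
    rw [List.ofFn_succ, List.prod_cons] at hw
    generalize (List.ofFn fun ℓ : Fin (n + 1) => γ (s ℓ.succ) ^ t ℓ.succ).prod = v at hw hsub
    have hv : v • (Uplus j ∪ Uminus j) ⊆
        Uplus (s ⟨0 + 1, by omega⟩) ∪ Uminus (s ⟨0 + 1, by omega⟩) := by
      rcases lt_or_gt_of_ne (ht ⟨0 + 1, by omega⟩) with h | h
      · exact (hsub.2 h).trans Set.subset_union_right
      · exact (hsub.1 h).trans Set.subset_union_left
    have hk := key _ _ hne.symm (t 0)
    subst hw
    rw [mul_smul]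
    exact ⟨fun h => (Set.smul_set_mono hv).trans (hk.1 h),
      fun h => (Set.smul_set_mono hv).trans (hk.2 h)⟩
end
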